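/- The Max rule R^m_{c(B_v)} satisfies Splitting Monotonicity: for every budgeting scenario E = (A, V, c, ℓ), every item a that belongs to some winning budget of E under R^m_{c(B_v)}, and every scenario E' obtained from E by splitting a into a nonempty set A' of new items, some winning budget of E' under R^m_{c(B_v)} (with satisfaction computed using the cost function c' of E') contains at least one item of A'. -/

import Mathlib

/-! Let `B ∋ a` be winning in the original scenario and let `W` be a winning budget of the split one.
If `W` meets `A'` there is nothing to do. Otherwise `W` only uses unsplit items, so it is feasible
with the same satisfaction in the original scenario (`fCost_unsplit`), hence does not beat `B`.
Replacing `a` by all of `A'` in `B` preserves both cost (`sum_split`) and satisfaction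
(`fCost_split`), so the resulting budget is at least as good as `W`; it is winning and contains
`A'`. -/

open Finset

/-- A budget `B` is feasible in scenario `(A, c, ℓ)` if it consists of available items
and its total cost is within the budget limit. -/
def feasible {ι : Type*} (A : Finset ι) (c : ι → ℕ) (ℓ : ℕ) (B : Finset ι) : Prop :=
  B ⊆ A ∧ ∑ a ∈ B, c a ≤ ℓ

/-- Total satisfaction of the voters `V` (with approval sets `appr`) from budget `B`,
under satisfaction function `f`. -/
def totalSat {ι υ : Type*} (V : Finset υ) (appr : υ → Finset ι)
    (f : Finset ι → Finset ι → ℕ) (B : Finset ι) : ℕ :=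
  ∑ v ∈ V, f (appr v) B

/-- `B` is a winning budget under the Max rule `R^m_f`. -/
def winning {ι υ : Type*} (A : Finset ι) (V : Finset υ) (appr : υ → Finset ι)
    (c : ι → ℕ) (ℓ : ℕ) (f : Finset ι → Finset ι → ℕ) (B : Finset ι) : Prop :=
  feasible A c ℓ B ∧
    ∀ B' : Finset ι, feasible A c ℓ B' → totalSat V appr f B' ≤ totalSat V appr f B

/-- Cardinality satisfaction: `f(A_v, B) = |A_v ∩ B|`. -/
def fCard {ι : Type*} [DecidableEq ι] : Finset ι → Finset ι → ℕ :=
  fun Av B => (Av ∩ B).card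

/-- Cost satisfaction: `f(A_v, B) = c(A_v ∩ B)`. -/
def fCost {ι : Type*} [DecidableEq ι] (c : ι → ℕ) : Finset ι → Finset ι → ℕ :=
  fun Av B => ∑ a ∈ Av ∩ B, c a

/-- Coverage satisfaction: `f(A_v, B) = 1` if `A_v ∩ B ≠ ∅`, else `0`. -/
def fCover {ι : Type*} [DecidableEq ι] : Finset ι → Finset ι → ℕ :=
  fun Av B => if (Av ∩ B).Nonempty then 1 else 0


/-- The set of feasible budgets is finite and contains `∅`, so the Max rule always has a winner. -/
lemma exists_winning {ι υ : Type*} (A : Finset ι) (V : Finset υ) (appr : υ → Finset ι)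
    (c : ι → ℕ) (ℓ : ℕ) (f : Finset ι → Finset ι → ℕ) :
    ∃ B, winning A V appr c ℓ f B := by
  classical
  obtain ⟨B, hB, hmax⟩ := Finset.exists_max_image
    (A.powerset.filter fun B => ∑ a ∈ B, c a ≤ ℓ) (totalSat V appr f) ⟨∅, by simp⟩
  simp only [Finset.mem_filter, Finset.mem_powerset] at hB hmax
  exact ⟨B, hB, hmax⟩

/-- Replacing `a` by its parts `A'` in a set of items preserves the cost. -/
lemma sum_split {ι : Type*} [DecidableEq ι] {A A' B : Finset ι} {a : ι} {c c' : ι → ℕ}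
    (hdisj : Disjoint A' (A.erase a)) (hc'old : ∀ x ∈ A.erase a, c' x = c x)
    (hc'sum : ∑ x ∈ A', c' x = c a) (hB : B ⊆ A) (haB : a ∈ B) :
    ∑ x ∈ B.erase a ∪ A', c' x = ∑ x ∈ B, c x := by
  have hsub : B.erase a ⊆ A.erase a := Finset.erase_subset_erase a hB
  rw [Finset.sum_union (hdisj.symm.mono_left hsub), hc'sum,
    Finset.sum_congr rfl fun x hx => hc'old x (hsub hx), Finset.sum_erase_add _ _ haB]

/-- A budget made of unsplit items gives every voter the same satisfaction before and after
the split. -/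
lemma fCost_unsplit {ι : Type*} [DecidableEq ι] {A A' S S' W : Finset ι} {a : ι} {c c' : ι → ℕ}
    (hdisj : Disjoint A' (A.erase a)) (hc'old : ∀ x ∈ A.erase a, c' x = c x)
    (hyes : a ∈ S → S' = S.erase a ∪ A') (hno : a ∉ S → S' = S) (hW : W ⊆ A.erase a) :
    fCost c' S' W = fCost c S W := by
  have hinter : S' ∩ W = S ∩ W := by
    by_cases haS : a ∈ S
    · rw [hyes haS]
      ext x
      have h1 : x ∈ W → x ∉ A' := fun hx hx' => Finset.disjoint_left.1 hdisj hx' (hW hx)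
      have h2 : x ∈ W → x ≠ a := fun hx => Finset.ne_of_mem_erase (hW hx)
      simp only [Finset.mem_inter, Finset.mem_union, Finset.mem_erase]
      tauto
    · rw [hno haS]
  simp only [fCost, hinter]
  exact Finset.sum_congr rfl fun x hx => hc'old x (hW (Finset.mem_inter.1 hx).2)

/-- Replacing `a` by all of its parts in a budget preserves every voter's satisfaction. -/
lemma fCost_split {ι : Type*} [DecidableEq ι] {A A' S S' B : Finset ι} {a : ι} {c c' : ι → ℕ}
    (hdisj : Disjoint A' (A.erase a)) (hc'old : ∀ x ∈ A.erase a, c' x = c x)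
    (hc'sum : ∑ x ∈ A', c' x = c a) (hS : S ⊆ A)
    (hyes : a ∈ S → S' = S.erase a ∪ A') (hno : a ∉ S → S' = S) (haB : a ∈ B) :
    fCost c' S' (B.erase a ∪ A') = fCost c S B := by
  by_cases haS : a ∈ S
  · have hinter : S' ∩ (B.erase a ∪ A') = (S ∩ B).erase a ∪ A' := by
      rw [hyes haS]
      ext x
      simp only [Finset.mem_inter, Finset.mem_union, Finset.mem_erase]
      tauto
    simp only [fCost, hinter]
    exact sum_split hdisj hc'old hc'sum (Finset.inter_subset_left.trans hS)
      (Finset.mem_inter.2 ⟨haS, haB⟩)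
  · have hSe : S ⊆ A.erase a := Finset.subset_erase.2 ⟨hS, haS⟩
    have hinter : S' ∩ (B.erase a ∪ A') = S ∩ B := by
      rw [hno haS]
      ext x
      have h1 : x ∈ S → x ∉ A' := fun hx hx' => Finset.disjoint_left.1 hdisj hx' (hSe hx)
      have h2 : x ∈ S → x ≠ a := fun hx => Finset.ne_of_mem_erase (hSe hx)
      simp only [Finset.mem_inter, Finset.mem_union, Finset.mem_erase]
      tauto
    simp only [fCost, hinter]
    exact Finset.sum_congr rfl fun x hx => hc'old x (hSe (Finset.mem_inter.1 hx).1)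

/-- `R^m_{c(B_v)}` satisfies Splitting Monotonicity: if item `a` belongs to
some winning budget and `a` is split into a nonempty set `A'` of new items (total cost
`c a`, approved exactly by the voters who approved `a`), then some winning budget of
the new scenario contains at least one item of `A'`. -/
theorem cost_maxRule_splittingMonotone
    {ι υ : Type*} [DecidableEq ι]
    (A : Finset ι) (V : Finset υ) (appr : υ → Finset ι) (c : ι → ℕ) (ℓ : ℕ)
    (happr : ∀ v ∈ V, appr v ⊆ A)
    (a : ι) (ha : a ∈ A)
    (A' : Finset ι) (hA'ne : A'.Nonempty) (hdisj : Disjoint A' (A.erase a))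
    (c' : ι → ℕ) (hc'old : ∀ x ∈ A.erase a, c' x = c x) (hc'sum : ∑ x ∈ A', c' x = c a)
    (appr' : υ → Finset ι)
    (happr'yes : ∀ v, a ∈ appr v → appr' v = (appr v).erase a ∪ A')
    (happr'no : ∀ v, a ∉ appr v → appr' v = appr v)
    (hwinE : ∃ B : Finset ι, winning A V appr c ℓ (fCost c) B ∧ a ∈ B) :
    ∃ B' : Finset ι,
      winning (A.erase a ∪ A') V appr' c' ℓ (fCost c') B' ∧ (B' ∩ A').Nonempty := by
  obtain ⟨B, ⟨⟨hBA, hBc⟩, hBmax⟩, haB⟩ := hwinE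
  obtain ⟨W, ⟨hWA, hWc⟩, hWmax⟩ := exists_winning (A.erase a ∪ A') V appr' c' ℓ (fCost c')
  by_cases hWA' : (W ∩ A').Nonempty
  · exact ⟨W, ⟨⟨hWA, hWc⟩, hWmax⟩, hWA'⟩
  have hWe : W ⊆ A.erase a := by
    intro x hx
    rcases Finset.mem_union.1 (hWA hx) with h | h
    · exact h
    · exact absurd ⟨x, Finset.mem_inter.2 ⟨hx, h⟩⟩ hWA'
  have hWfeas : feasible A c ℓ W :=
    ⟨hWe.trans (Finset.erase_subset a A),
      (Finset.sum_congr rfl fun x hx => (hc'old x (hWe hx)).symm).trans_le hWc⟩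
  have hWsat : totalSat V appr' (fCost c') W = totalSat V appr (fCost c) W :=
    Finset.sum_congr rfl fun v _ =>
      fCost_unsplit hdisj hc'old (happr'yes v) (happr'no v) hWe
  have hBsat : totalSat V appr' (fCost c') (B.erase a ∪ A') = totalSat V appr (fCost c) B :=
    Finset.sum_congr rfl fun v hv =>
      fCost_split hdisj hc'old hc'sum (happr v hv) (happr'yes v) (happr'no v) haB
  refine ⟨B.erase a ∪ A', ⟨⟨?_, ?_⟩, fun B' hB' => ?_⟩, ?_⟩
  · exact Finset.union_subset_union (Finset.erase_subset_erase a hBA) subset_rfl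
  · exact (sum_split hdisj hc'old hc'sum hBA haB).trans_le hBc
  · calc totalSat V appr' (fCost c') B'
        ≤ totalSat V appr' (fCost c') W := hWmax B' hB'
      _ = totalSat V appr (fCost c) W := hWsat
      _ ≤ totalSat V appr (fCost c) B := hBmax W hWfeas
      _ = totalSat V appr' (fCost c') (B.erase a ∪ A') := hBsat.symm
  · obtain ⟨x, hx⟩ := hA'ne
    exact ⟨x, Finset.mem_inter.2 ⟨Finset.mem_union_right _ hx, hx⟩⟩
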